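/- Suppose L is symmetric (L y y' = L y' y for all y, y'), and let F_M(v) = sup_{q ∈ Δ} (⟨v, q⟩ + H_M(q)) with subdifferential ∂F_M(v) = {g : Y → ℝ | F_M(u) ≥ F_M(v) + ⟨g, u − v⟩ for all u}. If for some v : Y → ℝ the set ∂F_M(v) is a singleton {q}, then there exist y, y' ∈ Y (possibly equal) such that q = (e_y + e_{y'}) / 2, where e_y is the indicator vector of y. -/

import Mathlib

open Finset Set

variable {Y : Type*} [Fintype Y] [DecidableEq Y] [Nonempty Y]

/-- Probability simplex over `Y`. -/
def simplexSet (Y : Type*) [Fintype Y] : Set (Y → ℝ) :=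
  {q | (∀ y, 0 ≤ q y) ∧ ∑ y, q y = 1}

/-- Bayes risk of the discrete loss `L`. -/
noncomputable def HL (L : Y → Y → ℝ) (q : Y → ℝ) : ℝ :=
  ⨅ y : Y, ∑ y', L y y' * q y'

/-- Optimal-label set. -/
noncomputable def ystar (L : Y → Y → ℝ) (q : Y → ℝ) : Set Y :=
  {y | ∑ y', L y y' * q y' = HL L q}

/-- Prediction set of label `y`. -/
noncomputable def predSet (L : Y → Y → ℝ) (y : Y) : Set (Y → ℝ) :=
  {q ∈ simplexSet Y | y ∈ ystar L q}

/-- Max-Margin loss. -/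
noncomputable def SM (L : Y → Y → ℝ) (v : Y → ℝ) (y : Y) : ℝ :=
  ⨆ y' : Y, (L y y' + v y' - v y)

/-- Bayes risk of the Max-Margin loss. -/
noncomputable def HM (L : Y → Y → ℝ) (q : Y → ℝ) : ℝ :=
  ⨅ v : Y → ℝ, ∑ y, q y * SM L v y

/-- Conditional-risk minimizers of the Max-Margin loss. -/
noncomputable def vstarM (L : Y → Y → ℝ) (q : Y → ℝ) : Set (Y → ℝ) :=
  {v | ∑ y, q y * SM L v y = HM L q}

/-- Restricted-Max-Margin loss. -/
noncomputable def SRM (L : Y → Y → ℝ) (v : Y → ℝ) (y : Y) : ℝ :=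
  sSup ((fun q => ∑ y', L y y' * q y' + ∑ z, v z * q z) '' predSet L y) - v y

/-- Bayes risk of the Restricted-Max-Margin loss. -/
noncomputable def HRM (L : Y → Y → ℝ) (q : Y → ℝ) : ℝ :=
  ⨅ v : Y → ℝ, ∑ y, q y * SRM L v y

/-- Conditional-risk minimizers of the Restricted-Max-Margin loss. -/
noncomputable def vstarRM (L : Y → Y → ℝ) (q : Y → ℝ) : Set (Y → ℝ) :=
  {v | ∑ y, q y * SRM L v y = HRM L q}

/-- Max-Min-Margin loss. -/
noncomputable def SMM (L : Y → Y → ℝ) (v : Y → ℝ) (y : Y) : ℝ :=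
  sSup ((fun q => (⨅ z : Y, ∑ y', L z y' * q y') + ∑ z, v z * q z) '' simplexSet Y) - v y

/-- Bayes risk of the Max-Min-Margin loss. -/
noncomputable def HMM (L : Y → Y → ℝ) (q : Y → ℝ) : ℝ :=
  ⨅ v : Y → ℝ, ∑ y, q y * SMM L v y

/-- Transportation polytope `U(q, q)`. -/
def Upoly (q : Y → ℝ) : Set (Y → Y → ℝ) :=
  {Q | (∀ y y', 0 ≤ Q y y') ∧ (∀ y, ∑ y', Q y y' = q y) ∧ (∀ y', ∑ y, Q y y' = q y')}

/-- The constraint set `C_L`. -/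
def CL (L : Y → Y → ℝ) : Set (Y → Y → ℝ) :=
  {Q | ∀ y z : Y, ∑ y', L y y' * Q y y' ≤ ∑ y', L z y' * Q y y'}

/-- Fenchel-type conjugate of the negative Max-Margin Bayes risk. -/
noncomputable def FM (L : Y → Y → ℝ) (v : Y → ℝ) : ℝ :=
  sSup ((fun q => (∑ z, v z * q z) + HM L q) '' simplexSet Y)

/-- Subdifferential of `F_M` at `v`. -/
noncomputable def subdiffFM (L : Y → Y → ℝ) (v : Y → ℝ) : Set (Y → ℝ) :=
  {g | ∀ u : Y → ℝ, FM L v + ∑ z, g z * (u z - v z) ≤ FM L u}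

/-!
For symmetric `L`, the conjugate `F_M` is a maximum of finitely many affine functions:
`F_M(v) = max_{i, j} (L i j + (v i + v j) / 2)`. The upper bound comes from testing the infimum
`H_M` at the score `v / 2`. For the lower bound, evaluate the supremum at `(e_i + e_j) / 2`, where
the two margins `w j - w i` and `w i - w j` cancel for every score `w`. The gradient
`(e_i + e_j) / 2` of a piece active at `v` is a subgradient at `v`, hence the only one when
`∂F_M(v)` is a singleton.
-/

section MaxMargin

variable {ι : Type*} {L : ι → ι → ℝ}

/-- The distribution `(e_i + e_j) / 2` (the vertex `e_i` when `i = j`): the gradients of the affine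
pieces of `F_M`. -/
noncomputable def midIndicator [DecidableEq ι] (i j : ι) : ι → ℝ :=
  midpoint ℝ (Pi.single i 1) (Pi.single j 1)

lemma midIndicator_apply [DecidableEq ι] (i j k : ι) :
    midIndicator i j k = ((if k = i then 1 else 0) + (if k = j then 1 else 0)) / 2 := by
  simp [midIndicator, midpoint_eq_smul_add, Pi.single_apply, div_eq_inv_mul]

lemma midIndicator_mem_simplexSet [Fintype ι] [DecidableEq ι] (i j : ι) :
    midIndicator i j ∈ simplexSet ι :=
  (convex_stdSimplex ℝ ι).midpoint_mem (single_mem_stdSimplex ℝ i) (single_mem_stdSimplex ℝ j)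

lemma sum_midIndicator_mul [Fintype ι] [DecidableEq ι] (i j : ι) (u : ι → ℝ) :
    ∑ k, midIndicator i j k * u k = (u i + u j) / 2 := by
  simp [midIndicator_apply, div_mul_eq_mul_div, add_mul, ← Finset.sum_div, Finset.sum_add_distrib]

lemma sum_mul_midIndicator [Fintype ι] [DecidableEq ι] (i j : ι) (u : ι → ℝ) :
    ∑ k, u k * midIndicator i j k = (u i + u j) / 2 := by
  simp only [mul_comm (u _), sum_midIndicator_mul]

/-- The affine function `v ↦ L i j + ⟨v, (e_i + e_j) / 2⟩`, the piece of `F_M` attached to the pair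
of labels `(i, j)`. -/
noncomputable def pairScore (L : ι → ι → ℝ) (v : ι → ℝ) (p : ι × ι) : ℝ :=
  L p.1 p.2 + (v p.1 + v p.2) / 2

lemma pairScore_add_sum_midIndicator_mul_sub [Fintype ι] [DecidableEq ι] (u v : ι → ℝ)
    (p : ι × ι) :
    pairScore L v p + ∑ k, midIndicator p.1 p.2 k * (u k - v k) = pairScore L u p := by
  rw [sum_midIndicator_mul p.1 p.2 fun k ↦ u k - v k, pairScore, pairScore]
  ring

lemma le_SM [Finite ι] (L : ι → ι → ℝ) (v : ι → ℝ) (i j : ι) : L i j + v j - v i ≤ SM L v i :=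
  Finite.le_ciSup (fun j ↦ L i j + v j - v i) j

lemma self_le_SM [Finite ι] (L : ι → ι → ℝ) (v : ι → ℝ) (i : ι) : L i i ≤ SM L v i := by
  simpa only [add_sub_cancel_right] using le_SM L v i i

lemma SM_half_le [Finite ι] (v : ι → ℝ) (i : ι) :
    SM L (v / 2) i ≤ (⨆ p, pairScore L v p) - v i := by
  have : Nonempty ι := ⟨i⟩
  refine ciSup_le fun j ↦ ?_
  have hpair : L i j + (v i + v j) / 2 ≤ ⨆ p, pairScore L v p :=
    Finite.le_ciSup (pairScore L v) (i, j)
  simp only [Pi.div_apply, Pi.ofNat_apply]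
  linarith

variable [Fintype ι]

lemma HM_le_sum_mul_SM {q : ι → ℝ} (hq : ∀ i, 0 ≤ q i) (v : ι → ℝ) :
    HM L q ≤ ∑ i, q i * SM L v i := by
  refine ciInf_le ⟨∑ i, q i * L i i, ?_⟩ v
  rintro _ ⟨w, rfl⟩
  exact Finset.sum_le_sum fun i _ ↦ mul_le_mul_of_nonneg_left (self_le_SM L w i) (hq i)

lemma sum_mul_add_HM_le_iSup_pairScore (v : ι → ℝ) {q : ι → ℝ} (hq : q ∈ simplexSet ι) :
    ∑ i, v i * q i + HM L q ≤ ⨆ p, pairScore L v p := by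
  obtain ⟨hq_nonneg, hq_sum⟩ := hq
  set c := ⨆ p, pairScore L v p
  calc ∑ i, v i * q i + HM L q
      ≤ ∑ i, v i * q i + ∑ i, q i * SM L (v / 2) i := by
        gcongr
        exact HM_le_sum_mul_SM hq_nonneg _
    _ ≤ ∑ i, v i * q i + ∑ i, q i * (c - v i) := by
        gcongr with i
        · exact hq_nonneg i
        · exact SM_half_le v i
    _ = ∑ i, q i * c := by
        rw [← Finset.sum_add_distrib]
        exact Finset.sum_congr rfl fun i _ ↦ by ring
    _ = c := by rw [← Finset.sum_mul, hq_sum, one_mul]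

lemma average_le_HM_midIndicator [DecidableEq ι] (L : ι → ι → ℝ) (i j : ι) :
    (L i j + L j i) / 2 ≤ HM L (midIndicator i j) := by
  refine le_ciInf fun w ↦ ?_
  rw [sum_midIndicator_mul]
  linarith [le_SM L w i j, le_SM L w j i]

lemma pairScore_le_sum_mul_midIndicator_add_HM [DecidableEq ι]
    (hsymm : ∀ i j, L i j = L j i) (v : ι → ℝ) (p : ι × ι) :
    pairScore L v p ≤ ∑ k, v k * midIndicator p.1 p.2 k + HM L (midIndicator p.1 p.2) := by
  rw [sum_mul_midIndicator, pairScore]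
  linarith [average_le_HM_midIndicator L p.1 p.2, hsymm p.1 p.2]

variable [Nonempty ι]

lemma FM_eq_iSup_pairScore (hsymm : ∀ i j, L i j = L j i) (v : ι → ℝ) :
    FM L v = ⨆ p, pairScore L v p := by
  classical
  refine IsGreatest.csSup_eq ⟨?attained, ?upper⟩
  case attained =>
    obtain ⟨p, hp⟩ := exists_eq_ciSup_of_finite (f := pairScore L v)
    have hmem := midIndicator_mem_simplexSet p.1 p.2
    exact ⟨midIndicator p.1 p.2, hmem, le_antisymm (sum_mul_add_HM_le_iSup_pairScore v hmem)
      (hp ▸ pairScore_le_sum_mul_midIndicator_add_HM hsymm v p)⟩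
  case upper =>
    rintro _ ⟨q, hq, rfl⟩
    exact sum_mul_add_HM_le_iSup_pairScore v hq

lemma midIndicator_mem_subdiffFM [DecidableEq ι] (hsymm : ∀ i j, L i j = L j i) {v : ι → ℝ}
    {p : ι × ι} (hp : pairScore L v p = ⨆ p, pairScore L v p) :
    midIndicator p.1 p.2 ∈ subdiffFM L v := fun u ↦ by
  rw [FM_eq_iSup_pairScore hsymm, FM_eq_iSup_pairScore hsymm, ← hp,
    pairScore_add_sum_midIndicator_mul_sub]
  exact Finite.le_ciSup (pairScore L u) p

theorem stmt17_general [DecidableEq ι] (hsymm : ∀ i j, L i j = L j i) (v : ι → ℝ) :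
    ∃ i j, midIndicator i j ∈ subdiffFM L v := by
  obtain ⟨p, hp⟩ := exists_eq_ciSup_of_finite (f := pairScore L v)
  exact ⟨p.1, p.2, midIndicator_mem_subdiffFM hsymm hp⟩

end MaxMargin

theorem stmt17 (Y : Type*) [Fintype Y] [DecidableEq Y] [Nonempty Y] (L : Y → Y → ℝ)
    (hcard : 2 ≤ Fintype.card Y)
    (hnonneg : ∀ y y', 0 ≤ L y y')
    (hzero : ∀ y y', L y y' = 0 ↔ y = y')
    (hsymm : ∀ y y', L y y' = L y' y)
    (v q : Y → ℝ)
    (hsingleton : subdiffFM L v = {q}) :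
    ∃ y y' : Y, q = fun z =>
      ((if z = y then (1 : ℝ) else 0) + (if z = y' then (1 : ℝ) else 0)) / 2 := by
  obtain ⟨y, y', hmem⟩ := stmt17_general hsymm v
  exact ⟨y, y', (hsingleton ▸ hmem).symm.trans (funext (midIndicator_apply y y'))⟩
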